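/- Let 𝕜 be a field of characteristic zero, A a 𝕜-vector space, T₊(A) the non-unital tensor algebra, 𝔤 = Hom(T₊(A), 𝕜), and ▷ the product (α ▷ β)(w) := −∑_{w₁w₂w₃ = w, each wᵢ non-empty} β(w₁w₃) α(w₂). Let d₁, d₂ ≥ 1 be integers, and suppose α ∈ 𝔤 vanishes on all words of length < d₁ and β ∈ 𝔤 vanishes on all words of length < d₂. Then α ▷ β vanishes on all words of length < d₁ + max(2, d₂). -/

import Mathlib

/-!
In a factorization `w = w₁w₂w₃` of a word of length `n`, put `q = deg w₂`, so that
`deg w₁w₃ = n - q`.  If `n < d₁ + max 2 d₂`, then either `q < d₁`, and `α(w₂) = 0`, or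
`n - q < max 2 d₂`; since `w₁` and `w₃` are non-empty, `n - q ≥ 2`, so in the latter case
`n - q < d₂` and `β(w₁w₃) = 0`.  Hence every summand of `(α ▷ β)(w)` vanishes.
-/

/-!
Common setting: `(A, φ)` a non-commutative probability space over a field `𝕜` of
characteristic zero.  A linear form on the non-unital tensor algebra
`T₊(A) = ⊕_{n ≥ 1} A^{⊗n}` is determined by its values on words `a₁ ⋯ aₙ`, i.e. by a
family of (multilinear) functions `(Fin n → A) → 𝕜`, one for each length `n`.
Non-crossing partitions of `[n]` are encoded as finsets of finsets of `Fin n`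
(position `i : Fin n` encodes the letter `aᵢ₊₁`).
-/

open scoped Classical
open Finset

namespace NCC

variable {𝕜 : Type*} [Field 𝕜] [CharZero 𝕜] {A : Type*}

/-- Families of scalar values indexed by words `a : Fin n → A` of every length `n`;
a linear form on `T₊(A)` is determined by such a family. -/
abbrev WordFun (𝕜 A : Type*) := ∀ n : ℕ, (Fin n → A) → 𝕜

/-- The word-family of an element of `𝔤 = Hom(T₊(A), 𝕜)`, the latter given as a
family of multilinear forms (one for each tensor degree `n ≥ 1`; the value in degree
`0` is irrelevant since `T₊(A)` has no degree-`0` component). -/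
def ofML [AddCommMonoid A] [Module 𝕜 A]
    (α : ∀ n : ℕ, MultilinearMap 𝕜 (fun _ : Fin n => A) 𝕜) : WordFun 𝕜 A :=
  fun n a => α n a

/-- The subword `a_S` of the word `a` indexed by `S`, letters taken in increasing
order of position. -/
def subWord {n : ℕ} (a : Fin n → A) (S : Finset (Fin n)) : Fin S.card → A :=
  fun i => a ((S.orderIsoOfFin rfl) i).1

/-- Evaluation of `α` on the subword of `a` indexed by `S`. -/
def evalOn (α : WordFun 𝕜 A) {n : ℕ} (a : Fin n → A) (S : Finset (Fin n)) : 𝕜 :=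
  α S.card (subWord a S)

/-- The positions of the middle factor `w₂` in the factorization `w = w₁w₂w₃` of a
word of length `n`, where `w₁` has length `p` and `w₂` has length `q`. -/
def middle (n p q : ℕ) : Finset (Fin n) :=
  univ.filter fun i => p ≤ i.1 ∧ i.1 < p + q

/-- The pre-Lie product `(α ▷ β)(w) = -∑_{w₁w₂w₃ = w} β(w₁w₃) α(w₂)`, the sum running
over all factorizations of `w` into three non-empty subwords (`p = deg w₁ ≥ 1`,
`q = deg w₂ ≥ 1`, `p + q < n`); the complement of the middle factor is `w₁w₃`. -/
def preLie (α β : WordFun 𝕜 A) : WordFun 𝕜 A := fun n a =>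
  - ∑ pq ∈ (range n ×ˢ range n).filter
      (fun pq => 1 ≤ pq.1 ∧ 1 ≤ pq.2 ∧ pq.1 + pq.2 < n),
    evalOn β a (middle n pq.1 pq.2)ᶜ * evalOn α a (middle n pq.1 pq.2)

/-- `π` is a set partition of `S ⊆ Fin n`: blocks are nonempty, pairwise disjoint,
with union `S`. -/
def IsPartitionOf {n : ℕ} (π : Finset (Finset (Fin n))) (S : Finset (Fin n)) : Prop :=
  (∀ B ∈ π, B.Nonempty) ∧ (∀ B ∈ π, ∀ C ∈ π, B ≠ C → Disjoint B C) ∧ π.sup id = S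

/-- `π` is non-crossing: there are no positions `i < j < k < l` with `i, k` in one
block and `j, l` in a different block. -/
def IsNonCrossing {n : ℕ} (π : Finset (Finset (Fin n))) : Prop :=
  ∀ B ∈ π, ∀ C ∈ π, B ≠ C →
    ¬ ∃ i ∈ B, ∃ j ∈ C, ∃ k ∈ B, ∃ l ∈ C, i < j ∧ j < k ∧ k < l

/-- Nesting order on blocks: `NestLT B C` (i.e. `B < C`) means `C` is nested strictly
inside `B`: there are `x, y ∈ B` with `x < z < y` for all `z ∈ C`. -/
def NestLT {n : ℕ} (B C : Finset (Fin n)) : Prop :=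
  ∃ x ∈ B, ∃ y ∈ B, ∀ z ∈ C, x < z ∧ z < y

/-- The forest factorial `t(π)!` of the nesting forest of `π`: the product, over all
blocks `B`, of the number of blocks weakly above `B` in the nesting order, i.e. the
product of the tree factorials of the trees of the nesting forest of `π`. -/
noncomputable def forestFact {n : ℕ} (π : Finset (Finset (Fin n))) : ℕ :=
  ∏ B ∈ π, (π.filter fun C => B = C ∨ NestLT B C).card

/-- `m(π)`: the number of linear extensions of the nesting order on the blocks of `π`,
i.e. the number of monotone partitions with underlying non-crossing partition `π`. -/
noncomputable def numMono {n : ℕ} (π : Finset (Finset (Fin n))) : ℕ :=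
  Fintype.card {f : {B // B ∈ π} → Fin π.card //
    Function.Bijective f ∧ ∀ B C : {B // B ∈ π}, NestLT B.1 C.1 → f B < f C}

/-- Left iteration `L^k_{ρ ▷}(κ) = ρ ▷ (ρ ▷ (⋯ (ρ ▷ κ) ⋯))`. -/
def lIter (ρ κ : WordFun 𝕜 A) : ℕ → WordFun 𝕜 A
  | 0 => κ
  | k + 1 => preLie ρ (lIter ρ κ k)

/-- The non-crossing partitions `NC(n)` of `[n]`. -/
noncomputable def NCParts (n : ℕ) : Finset (Finset (Finset (Fin n))) :=
  univ.filter fun π => IsPartitionOf π univ ∧ IsNonCrossing π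

/-- The interval partitions `I(n)` of `[n]` (every block is an interval). -/
noncomputable def IntervalParts (n : ℕ) : Finset (Finset (Finset (Fin n))) :=
  univ.filter fun π => IsPartitionOf π univ ∧
    ∀ B ∈ π, ∀ x ∈ B, ∀ y ∈ B, ∀ z : Fin n, x ≤ z → z ≤ y → z ∈ B

/-- The multivariate moment `φ(a₁ ·_A ⋯ ·_A aₙ)`. -/
def moment [Ring A] [Algebra 𝕜 A] (φ : A →ₗ[𝕜] 𝕜) {n : ℕ} (a : Fin n → A) : 𝕜 :=
  φ (List.ofFn a).prod

/-- `ω_k(π)`: the number of quasi-monotone structures of rank `k` on `π`, i.e. of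
surjections `f` from the blocks of `π` onto `[k]` with `f B < f C` whenever `B < C`
in the nesting order. -/
noncomputable def omegaK {n : ℕ} (π : Finset (Finset (Fin n))) (k : ℕ) : ℕ :=
  Fintype.card {f : {B // B ∈ π} → Fin k //
    Function.Surjective f ∧ ∀ B C : {B // B ∈ π}, NestLT B.1 C.1 → f B < f C}

/-- Murua's coefficient `ω(π) = ω(t(π)) = ∑_{k=1}^{|π|} ((-1)^{k+1}/k) ω_k(π)` of an
irreducible non-crossing partition `π` (depending only on its nesting tree). -/
noncomputable def omegaIrr {n : ℕ} (π : Finset (Finset (Fin n))) : ℚ :=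
  ∑ k ∈ Finset.Icc 1 π.card, ((-1 : ℚ) ^ (k + 1) / k) * omegaK π k

/-- The middle factor of a factorization `w = w₁w₂w₃` with `deg w₂ = q` has `q` letters. -/
theorem card_middle {n p q : ℕ} (h : p + q ≤ n) : (middle n p q).card = q := by
  have himg : (middle n p q).map Fin.valEmbedding = Finset.Ico p (p + q) := by
    ext x
    simp only [middle, Finset.mem_map, Finset.mem_filter, Finset.mem_univ, true_and,
      Fin.valEmbedding_apply, Finset.mem_Ico]
    constructor
    · rintro ⟨i, hi, rfl⟩
      exact hi
    · intro hx
      exact ⟨⟨x, by omega⟩, hx, rfl⟩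
  rw [← Finset.card_map Fin.valEmbedding, himg, Nat.card_Ico]
  omega

/-- Effective degrees: if `α ∈ 𝔤` vanishes on all words of length
`< d₁` and `β ∈ 𝔤` vanishes on all words of length `< d₂` (`d₁, d₂ ≥ 1`), then
`α ▷ β` vanishes on all words of length `< d₁ + max 2 d₂`. -/
theorem preLie_effective_degree {𝕜 A : Type*} [Field 𝕜] [CharZero 𝕜]
    [AddCommMonoid A] [Module 𝕜 A]
    (α β : ∀ n : ℕ, MultilinearMap 𝕜 (fun _ : Fin n => A) 𝕜)
    (d₁ d₂ : ℕ) (hd₁ : 1 ≤ d₁) (hd₂ : 1 ≤ d₂)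
    (hα : ∀ k < d₁, ∀ a : Fin k → A, α k a = 0)
    (hβ : ∀ k < d₂, ∀ a : Fin k → A, β k a = 0) :
    ∀ k < d₁ + max 2 d₂, ∀ a : Fin k → A, preLie (ofML α) (ofML β) k a = 0 := by
  intro n hn a
  unfold preLie
  rw [neg_eq_zero]
  refine Finset.sum_eq_zero ?_
  rintro ⟨p, q⟩ hpq
  obtain ⟨-, hp, hq, hlt⟩ := Finset.mem_filter.mp hpq
  simp only at hp hq hlt ⊢
  have hmid : (middle n p q).card = q := card_middle hlt.le
  have hcompl : (middle n p q)ᶜ.card = n - q := by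
    rw [Finset.card_compl, hmid, Fintype.card_fin]
  by_cases h : q < d₁
  · exact mul_eq_zero_of_right _ (hα _ (by rwa [hmid]) _)
  · -- `w₁` and `w₃` are non-empty, so `2 ≤ n - q`; with `n - q < max 2 d₂` this gives `n - q < d₂`.
    exact mul_eq_zero_of_left (hβ _ (by rw [hcompl]; omega) _) _

end NCC
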